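/- Let n ≥ 1 and let S ⊆ [n] be a cyclic peak set in [n], i.e. S = cPk(w) for some w ∈ S_n. Then for every F ⊆ [n]: the number of subsets E ⊆ F with S ⊆ E △ (E+1) equals 2^{|F|−|S|} if S ⊆ F ∪ (F+1), and equals 0 otherwise. Here △ denotes symmetric difference and E+1 is the cyclic shift of E by 1 modulo n. -/

import Mathlib

/-- Cyclic shift of a subset `E` of `ℤ/n` (0-indexed model of `[n]`) by `i`. -/
def shiftF (n : ℕ) (E : Finset (Fin n)) (i : Fin n) : Finset (Fin n) :=
  E.image (· + i)

/-- The cyclic peak set `cPk w` (0-indexed positions, indices mod `n`). -/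
def cPkF (n : ℕ) [NeZero n] (w : Fin n → Fin n) : Finset (Fin n) :=
  Finset.univ.filter fun i => w (i - 1) < w i ∧ w (i + 1) < w i

/-- If the pairs `{i, g i}` for `i ∈ S` are pairwise disjoint and nondegenerate, and each of them
meets `F`, then a proportion of exactly `2 ^ (-|S|)` of the subsets of `F` separates all of them. -/
theorem card_separating_mul_two_pow {α : Type*} [DecidableEq α] (g : α → α)
    (hg : Function.Injective g) (F S : Finset α) (hS : ∀ i ∈ S, g i ∉ S)
    (hF : ∀ i ∈ S, i ∈ F ∨ g i ∈ F) :
    (F.powerset.filter fun E => ∀ i ∈ S, ¬(i ∈ E ↔ g i ∈ E)).card * 2 ^ S.card =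
      2 ^ F.card := by
  induction S using Finset.induction_on with
  | empty => simp
  | insert a S ha ih =>
    have hS' : ∀ i ∈ S, g i ∉ S := fun i hi h =>
      hS i (Finset.mem_insert_of_mem hi) (Finset.mem_insert_of_mem h)
    have ih := ih hS' fun i hi => hF i (Finset.mem_insert_of_mem hi)
    have hga : g a ≠ a ∧ g a ∉ S := by
      simpa using hS a (Finset.mem_insert_self a S)
    have hne : ∀ i ∈ S, g i ≠ a := fun i hi h =>
      hS i (Finset.mem_insert_of_mem hi) (h ▸ Finset.mem_insert_self a S)
    have hinj : ∀ i ∈ S, g i ≠ g a := fun i hi h => ha (hg h ▸ hi)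
    obtain ⟨x, hxF, hx⟩ : ∃ x ∈ F, x = a ∨ x = g a := by
      rcases hF a (Finset.mem_insert_self a S) with h | h
      · exact ⟨a, h, Or.inl rfl⟩
      · exact ⟨g a, h, Or.inr rfl⟩
    have hxS : ∀ i ∈ S, i ≠ x ∧ g i ≠ x := by grind
    set A := F.powerset.filter fun E => ∀ i ∈ S, ¬(i ∈ E ↔ g i ∈ E) with hA
    have hflip : ∀ E ∈ A, symmDiff E {x} ∈ A := by
      intro E hE
      simp only [hA, Finset.mem_filter, Finset.mem_powerset] at hE ⊢
      refine ⟨fun y hy => ?_, fun i hi => ?_⟩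
      · rw [Finset.mem_symmDiff, Finset.mem_singleton] at hy
        rcases hy with hy | hy
        · exact hE.1 hy.1
        · exact hy.1 ▸ hxF
      · simpa [Finset.mem_symmDiff, hxS i hi] using hE.2 i hi
    have hswap : ∀ E : Finset α, (a ∈ symmDiff E {x} ↔ g a ∈ symmDiff E {x}) ↔
        ¬(a ∈ E ↔ g a ∈ E) := by
      intro E
      simp only [Finset.mem_symmDiff, Finset.mem_singleton]
      grind
    have hcard : (A.filter fun E => ¬(a ∈ E ↔ g a ∈ E)).card =
        (A.filter fun E => (a ∈ E ↔ g a ∈ E)).card := by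
      refine Finset.card_nbij' (fun E => symmDiff E {x}) (fun E => symmDiff E {x}) ?_ ?_ ?_ ?_
      · intro E hE
        simp only [Finset.coe_filter, Set.mem_ofPred_eq] at hE ⊢
        exact ⟨hflip E hE.1, (hswap E).2 hE.2⟩
      · intro E hE
        simp only [Finset.coe_filter, Set.mem_ofPred_eq] at hE ⊢
        exact ⟨hflip E hE.1, fun h => (hswap E).1 h hE.2⟩
      · intro E _
        exact symmDiff_symmDiff_cancel_right _ _
      · intro E _
        exact symmDiff_symmDiff_cancel_right _ _
    have hfilter : (F.powerset.filter fun E => ∀ i ∈ insert a S, ¬(i ∈ E ↔ g i ∈ E)) =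
        A.filter fun E => ¬(a ∈ E ↔ g a ∈ E) := by
      ext E
      simp only [hA, Finset.mem_filter, Finset.forall_mem_insert]
      tauto
    have hsum := Finset.card_filter_add_card_filter_not (s := A) fun E => (a ∈ E ↔ g a ∈ E)
    rw [hfilter, Finset.card_insert_of_notMem ha, ← ih, ← hsum, ← hcard]
    ring

theorem mem_shiftF_iff {n : ℕ} [NeZero n] (E : Finset (Fin n)) (i j : Fin n) :
    j ∈ shiftF n E i ↔ j - i ∈ E := by
  simp only [shiftF, Finset.mem_image]
  constructor
  · rintro ⟨k, hk, rfl⟩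
    simpa using hk
  · exact fun h => ⟨j - i, h, sub_add_cancel j i⟩

theorem sub_one_notMem_cPkF {n : ℕ} [NeZero n] (w : Fin n → Fin n) {i : Fin n}
    (hi : i ∈ cPkF n w) : i - 1 ∉ cPkF n w := by
  simp only [cPkF, Finset.mem_filter, Finset.mem_univ, true_and] at hi ⊢
  rw [sub_add_cancel]
  exact fun h => lt_asymm hi.1 h.2

/-- if `S` is a cyclic peak set in `[n]`, then for every `F ⊆ [n]` the
number of subsets `E ⊆ F` with `S ⊆ E △ (E+1)` equals `2^{|F|−|S|}` when
`S ⊆ F ∪ (F+1)`, and `0` otherwise. -/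
theorem stmt11 (n : ℕ) [NeZero n] (S : Finset (Fin n))
    (hS : ∃ w : Equiv.Perm (Fin n), cPkF n ⇑w = S) (F : Finset (Fin n)) :
    (F.powerset.filter (fun E => S ⊆ symmDiff E (shiftF n E 1))).card =
      if S ⊆ F ∪ shiftF n F 1 then 2 ^ (F.card - S.card) else 0 := by
  obtain ⟨w, rfl⟩ := hS
  set S := cPkF n w
  split_ifs with h
  · have hfilter : (F.powerset.filter fun E => S ⊆ symmDiff E (shiftF n E 1)) =
        F.powerset.filter fun E => ∀ i ∈ S, ¬(i ∈ E ↔ i - 1 ∈ E) := by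
      refine Finset.filter_congr fun E _ => forall₂_congr fun i _ => ?_
      rw [Finset.mem_symmDiff, mem_shiftF_iff]
      tauto
    have hmul := card_separating_mul_two_pow (fun i : Fin n => i - 1) sub_left_injective F S
      (fun i hi => sub_one_notMem_cPkF w hi) fun i hi => by
        simpa [mem_shiftF_iff] using h hi
    have hle : S.card ≤ F.card :=
      (Nat.pow_dvd_pow_iff_le_right (by norm_num)).1 (Dvd.intro_left _ hmul)
    rw [hfilter]
    refine Nat.eq_of_mul_eq_mul_right (pow_pos two_pos S.card) ?_
    rw [← pow_add, Nat.sub_add_cancel hle]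
    convert hmul
  · rw [Finset.card_eq_zero, Finset.filter_eq_empty_iff]
    intro E hE hSE
    refine h fun i hi => ?_
    have hEF := Finset.mem_powerset.1 hE
    have hi := hSE hi
    rw [Finset.mem_symmDiff, mem_shiftF_iff] at hi
    rw [Finset.mem_union, mem_shiftF_iff]
    exact hi.imp (fun h => hEF h.1) fun h => hEF h.1
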